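/- Let α < β < γ be real numbers, Q(z) = (z−α)(z−β)(z−γ), P = Q'/2, and let n ≥ 1 be an integer. Then for each p ∈ {0, 1, …, n} there exists, up to multiplication of S by a nonzero constant, exactly one pair (V, S) of polynomials with deg V ≤ 1 and deg S = n satisfying Q·S'' + P·S' + V·S = 0 identically such that S has n simple real roots, exactly p of which lie in the open interval (α, β) and the remaining n−p in the open interval (β, γ). In particular there are exactly n+1 polynomials V of degree at most 1 for which the equation has a polynomial solution of degree n. -/

import Mathlib

open Polynomial

/-- `S` is a Stieltjes polynomial of the Lamé equation `Q S'' + P S' + V S = 0` of degree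
`n` with `n` simple real roots, exactly `p` of them in `(α,β)` and the remaining `n - p`
in `(β,γ)`, with Van Vleck polynomial `V` of degree at most 1. -/
def NiceSol (α β γ : ℝ) (Q P : Polynomial ℂ) (n p : ℕ) (V S : Polynomial ℂ) : Prop :=
  V.degree ≤ 1 ∧ S.natDegree = n ∧
  Q * (derivative (derivative S)) + P * (derivative S) + V * S = 0 ∧
  {z : ℂ | S.IsRoot z}.ncard = n ∧
  (∀ z : ℂ, S.IsRoot z → z.im = 0) ∧
  {z : ℂ | S.IsRoot z ∧ z.re ∈ Set.Ioo α β}.ncard = p ∧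
  {z : ℂ | S.IsRoot z ∧ z.re ∈ Set.Ioo β γ}.ncard = n - p

/-! Place unit charges at `x₁, …, xₙ`, with `p` of them in `(α, β)` and the rest in `(β, γ)`, in
the field of fixed positive charges at `α, β, γ`. The product `∏ w (xᵢ) * ∏_{i ≠ j} |xᵢ - xⱼ|`,
where `w` is the external field, attains a positive maximum on the corresponding box; at a maximum
the charges are distinct and interior, and the critical point equations say exactly that
`Q S'' + P S'` vanishes at the roots of `S = ∏ (X - xᵢ)`. Hence `S` divides `Q S'' + P S'`, which
yields `V`.

Conversely, comparing leading coefficients, the linear coefficient of `V` is determined by `n`, and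
the constant coefficient is minus an eigenvalue of an operator on the `n + 1`-dimensional space of
polynomials of degree at most `n`; so there are at most `n + 1` polynomials `V`. The equation
determines `S` from `V` up to scaling, so different `p` have different `V`. Therefore the `n + 1`
maximizers account for every `V`, which gives both the count and the uniqueness. -/

section Algebra

variable {R : Type*} [CommRing R] {Q P V S : R[X]} {d n : ℕ}

/-- The differential operator `S ↦ Q S'' + P S'` of the generalized Lamé equation. -/
noncomputable def lameOperator (Q P : R[X]) : R[X] →ₗ[R] R[X] :=
  LinearMap.mulLeft R Q ∘ₗ derivative ∘ₗ derivative + LinearMap.mulLeft R P ∘ₗ derivative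

theorem lameOperator_apply (Q P S : R[X]) :
    lameOperator Q P S = Q * derivative (derivative S) + P * derivative S :=
  rfl

theorem lameOperator_map {A : Type*} [CommRing A] (f : R →+* A) (Q P S : R[X]) :
    lameOperator (Q.map f) (P.map f) (S.map f) = (lameOperator Q P S).map f := by
  simp only [lameOperator_apply, Polynomial.map_add, Polynomial.map_mul, derivative_map]

theorem eval_lameOperator_X_sub_C_mul (Q P S : R[X]) (a : R) :
    (lameOperator Q P ((X - C a) * S)).eval a =
      2 * Q.eval a * (derivative S).eval a + P.eval a * S.eval a := by
  simp only [lameOperator_apply, derivative_mul, derivative_add, derivative_X_sub_C, derivative_one,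
    eval_add, eval_mul, eval_sub, eval_X, eval_C, eval_one, eval_zero]
  ring

theorem natDegree_mul_derivative_le (hP : P.natDegree ≤ d + 1) :
    (P * derivative S).natDegree ≤ S.natDegree + d := by
  rcases Nat.eq_zero_or_pos S.natDegree with hS | hS
  · simp [derivative_of_natDegree_zero hS]
  · have := natDegree_derivative_le S
    exact natDegree_mul_le.trans (by omega)

theorem natDegree_lameOperator_le (hQ : Q.natDegree ≤ d + 2) (hP : P.natDegree ≤ d + 1) :
    (lameOperator Q P S).natDegree ≤ S.natDegree + d := by
  refine natDegree_add_le_of_degree_le ?_ (natDegree_mul_derivative_le hP)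
  rcases Nat.eq_zero_or_pos S.natDegree with hS | hS
  · simp [derivative_of_natDegree_zero hS]
  · have := natDegree_derivative_le S
    exact (natDegree_mul_derivative_le hQ).trans (by omega)

theorem coeff_mul_derivative (hP : P.natDegree ≤ d + 1) (hS : S.natDegree ≤ n) :
    (P * derivative S).coeff (d + n) = n * P.coeff (d + 1) * S.coeff n := by
  obtain _ | m := n
  · simp [derivative_of_natDegree_zero (Nat.le_zero.1 hS)]
  · have hS' : (derivative S).natDegree ≤ m := (natDegree_derivative_le S).trans (by omega)
    rw [← add_assoc, add_right_comm, coeff_mul_add_eq_of_natDegree_le hP hS', coeff_derivative]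
    push_cast
    ring

/-- The indicial polynomial at infinity of the operator `Q S'' + P S'` with `deg Q ≤ d + 2` and
`deg P ≤ d + 1`: the coefficient of `X ^ (n + d)` in the image of `X ^ n`. -/
def indicial (Q P : R[X]) (d n : ℕ) : R :=
  n * ((n - 1) * Q.coeff (d + 2) + P.coeff (d + 1))

theorem coeff_lameOperator (hQ : Q.natDegree ≤ d + 2) (hP : P.natDegree ≤ d + 1)
    (hS : S.natDegree ≤ n) :
    (lameOperator Q P S).coeff (d + n) = indicial Q P d n * S.coeff n := by
  rw [lameOperator_apply, coeff_add, coeff_mul_derivative hP hS, indicial]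
  obtain _ | m := n
  · simp [derivative_of_natDegree_zero (Nat.le_zero.1 hS)]
  · have hS' : (derivative S).natDegree ≤ m := (natDegree_derivative_le S).trans (by omega)
    rw [← add_assoc, add_right_comm, coeff_mul_derivative hQ hS', coeff_derivative]
    push_cast
    ring

theorem coeff_eq_neg_indicial [IsDomain R] (hQ : Q.natDegree ≤ d + 2) (hP : P.natDegree ≤ d + 1)
    (hV : V.natDegree ≤ d) (hS : S ≠ 0) (h : lameOperator Q P S + V * S = 0) :
    V.coeff d = -indicial Q P d S.natDegree := by
  have hcoeff := congrArg (fun p : R[X] => p.coeff (d + S.natDegree)) h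
  simp only [coeff_add, coeff_lameOperator hQ hP le_rfl, coeff_zero,
    coeff_mul_add_eq_of_natDegree_le hV le_rfl, ← add_mul] at hcoeff
  have hlead : S.coeff S.natDegree ≠ 0 := leadingCoeff_ne_zero.2 hS
  exact eq_neg_of_add_eq_zero_right ((mul_eq_zero.1 hcoeff).resolve_right hlead)

end Algebra

section VanVleck

variable {K : Type*} [Field K] {Q P V S T : K[X]} {d : ℕ}

theorem exists_eq_C_mul_of_lameOperator (hQ : Q.natDegree ≤ d + 2) (hP : P.natDegree ≤ d + 1)
    (hV : V.natDegree ≤ d) (hinj : Function.Injective (indicial Q P d)) (hS : S ≠ 0) (hT : T ≠ 0)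
    (hSV : lameOperator Q P S + V * S = 0) (hTV : lameOperator Q P T + V * T = 0) :
    ∃ c : K, c ≠ 0 ∧ T = C c * S := by
  have hdeg {U : K[X]} (hU : U ≠ 0) (hUV : lameOperator Q P U + V * U = 0) :
      U.natDegree = S.natDegree :=
    hinj <| neg_injective <| (coeff_eq_neg_indicial hQ hP hV hU hUV).symm.trans
      (coeff_eq_neg_indicial hQ hP hV hS hSV)
  have hlS : S.leadingCoeff ≠ 0 := leadingCoeff_ne_zero.2 hS
  have hlT : T.leadingCoeff ≠ 0 := leadingCoeff_ne_zero.2 hT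
  set c := T.leadingCoeff / S.leadingCoeff with hc
  refine ⟨c, div_ne_zero hlT hlS, ?_⟩
  -- `T - c S` solves the same equation with a smaller degree, so it must vanish.
  by_contra hne
  have hD : T - C c * S ≠ 0 := sub_ne_zero.2 hne
  have hDV : lameOperator Q P (T - C c * S) + V * (T - C c * S) = 0 := by
    rw [map_sub, ← smul_eq_C_mul, map_smul, smul_eq_C_mul, smul_eq_C_mul]
    linear_combination hTV - C c * hSV
  refine leadingCoeff_ne_zero.2 hD ?_
  rw [leadingCoeff, hdeg hD hDV, coeff_sub, coeff_C_mul, ← hdeg hT hTV, coeff_natDegree,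
    hdeg hT hTV, coeff_natDegree, hc, div_mul_cancel₀ _ hlS, sub_self]

theorem encard_eigenvalues_le_finrank {M : Type*} [AddCommGroup M] [Module K M]
    (f : Module.End K M) (W : Submodule K M) [Module.Finite K W] :
    {μ : K | ∃ w ∈ W, f.HasEigenvector μ w}.encard ≤ Module.finrank K W := by
  choose w hwW hw using fun μ : {μ : K | ∃ w ∈ W, f.HasEigenvector μ w} => μ.2
  have hli : LinearIndependent K fun μ => (⟨w μ, hwW μ⟩ : W) :=
    .of_comp W.subtype (f.eigenvectors_linearIndependent _ w hw)
  have := hli.finite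
  have := Fintype.ofFinite {μ : K | ∃ w ∈ W, f.HasEigenvector μ w}
  rw [Set.encard, ENat.card_eq_coe_fintype_card]
  exact_mod_cast hli.fintype_card_le_finrank

/-- The Van Vleck polynomials of degree at most one belonging to the Stieltjes polynomials of
degree `n`. -/
def vanVleckSet (Q P : K[X]) (n : ℕ) : Set K[X] :=
  {V | V.degree ≤ 1 ∧ ∃ S : K[X], S.natDegree = n ∧ S ≠ 0 ∧ lameOperator Q P S + V * S = 0}

/-- The linear coefficient of `V` is forced, so `V` is determined by its constant coefficient,
which is minus an eigenvalue of an operator on the polynomials of degree at most `n`. -/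
theorem encard_vanVleckSet_le (hQ : Q.natDegree ≤ 3) (hP : P.natDegree ≤ 2) (n : ℕ) :
    (vanVleckSet Q P n).encard ≤ n + 1 := by
  set a : K := -indicial Q P 1 n
  let f : Module.End K K[X] := lameOperator Q P + LinearMap.mulLeft K (C a * X)
  have hV {V : K[X]} (h : V ∈ vanVleckSet Q P n) : V = C a * X + C (V.coeff 0) := by
    obtain ⟨hV, S, rfl, hS, hSV⟩ := h
    rw [show a = V.coeff 1 from
      (coeff_eq_neg_indicial hQ hP (natDegree_le_of_degree_le hV) hS hSV).symm]
    exact eq_X_add_C_of_degree_le_one hV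
  have hinj : Set.InjOn (fun V : K[X] => -V.coeff 0) (vanVleckSet Q P n) := fun V h W h' heq => by
    rw [hV h, hV h', neg_injective heq]
  have hmaps : Set.MapsTo (fun V : K[X] => -V.coeff 0) (vanVleckSet Q P n)
      {μ | ∃ S ∈ degreeLT K (n + 1), f.HasEigenvector μ S} := by
    intro V h
    obtain ⟨-, S, rfl, hS, hSV⟩ := id h
    refine ⟨S, mem_degreeLT.2 ((natDegree_lt_iff_degree_lt hS).1 (Nat.lt_succ_self _)),
      Module.End.hasEigenvector_iff.2 ⟨Module.End.mem_eigenspace_iff.2 ?_, hS⟩⟩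
    rw [hV h] at hSV
    simp only [f, LinearMap.add_apply, LinearMap.mulLeft_apply, smul_eq_C_mul, C_neg]
    linear_combination hSV
  refine (Set.encard_le_encard_of_injOn hmaps hinj).trans
    ((encard_eigenvalues_le_finrank f _).trans ?_)
  rw [(degreeLTEquiv K (n + 1)).finrank_eq, Module.finrank_fin_fun, Nat.cast_add, Nat.cast_one]

theorem exists_natDegree_le_of_eval_lameOperator_eq_zero {ι : Type*} [Fintype ι] {x : ι → K}
    (hQ : Q.natDegree ≤ d + 2) (hP : P.natDegree ≤ d + 1) (hx : Function.Injective x)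
    (h : ∀ i, (lameOperator Q P (Lagrange.nodal Finset.univ x)).eval (x i) = 0) :
    ∃ V : K[X], V.natDegree ≤ d ∧
      lameOperator Q P (Lagrange.nodal Finset.univ x) + V * Lagrange.nodal Finset.univ x = 0 := by
  set S := Lagrange.nodal Finset.univ x
  obtain ⟨W, hW⟩ : S ∣ lameOperator Q P S :=
    Fintype.prod_dvd_of_coprime (pairwise_coprime_X_sub_C hx) fun i => dvd_iff_isRoot.2 (h i)
  refine ⟨-W, ?_, by rw [hW]; ring⟩
  have hdeg : (S * W).natDegree ≤ S.natDegree + d := hW ▸ natDegree_lameOperator_le hQ hP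
  rw [natDegree_neg]
  rcases eq_or_ne W 0 with rfl | hW0
  · simp
  · rwa [(Lagrange.nodal_monic (s := Finset.univ) (v := x)).natDegree_mul' hW0,
      add_le_add_iff_left] at hdeg

end VanVleck

theorem exists_injective_forall_mem_of_infinite {ι A : Type*} [Finite ι] {s : ι → Set A}
    (hs : ∀ i, (s i).Infinite) : ∃ f : ι → A, Function.Injective f ∧ ∀ i, f i ∈ s i := by
  classical
  have := Fintype.ofFinite ι
  choose t hts htcard using fun i => (hs i).exists_subset_card_eq (Fintype.card ι)
  have hall (J : Finset ι) : J.card ≤ (J.biUnion t).card := by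
    obtain rfl | ⟨i, hi⟩ := J.eq_empty_or_nonempty
    · simp
    · exact (J.card_le_univ.trans (htcard i).ge).trans
        (Finset.card_le_card (Finset.subset_biUnion_of_mem t hi))
  obtain ⟨f, hf, hft⟩ := (Finset.all_card_le_biUnion_card_iff_exists_injective t).1 hall
  exact ⟨f, hf, fun i => hts i (hft i)⟩

section Electrostatics

variable {ι : Type*} [Fintype ι] [DecidableEq ι] {w : ℝ → ℝ} {q p : ℝ[X]}

/-- The exponential of minus the electrostatic energy of positive unit charges at the points `x i`
in the external field of potential `-log w`, with each pair of charges counted in both orders. -/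
noncomputable def coulombProduct (w : ℝ → ℝ) (x : ι → ℝ) : ℝ :=
  (∏ i, w (x i)) * ∏ i, ∏ j ∈ Finset.univ.erase i, |x i - x j|

theorem continuous_coulombProduct (hw : Continuous w) :
    Continuous (coulombProduct (ι := ι) w) := by
  unfold coulombProduct
  fun_prop

theorem coulombProduct_nonneg (hw : ∀ t, 0 ≤ w t) (x : ι → ℝ) : 0 ≤ coulombProduct w x :=
  mul_nonneg (Finset.prod_nonneg fun _ _ => hw _)
    (Finset.prod_nonneg fun _ _ => Finset.prod_nonneg fun _ _ => abs_nonneg _)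

theorem coulombProduct_ne_zero_iff {x : ι → ℝ} :
    coulombProduct w x ≠ 0 ↔ (∀ i, w (x i) ≠ 0) ∧ Function.Injective x := by
  simp only [coulombProduct, mul_ne_zero_iff, Finset.prod_ne_zero_iff, Finset.mem_univ,
    Finset.mem_erase, true_imp_iff, and_true, abs_ne_zero, sub_ne_zero]
  refine and_congr_right fun _ => ⟨fun h i j hij => ?_, fun h i j hij => ?_⟩
  · by_contra hne
    exact h i j (Ne.symm hne) hij
  · exact h.ne hij.symm

theorem exists_coulombProduct_update (w : ℝ → ℝ) (x : ι → ℝ) (i : ι) :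
    ∃ c : ℝ, ∀ t : ℝ, coulombProduct w (Function.update x i t) =
      c * (w t * (Lagrange.nodal (Finset.univ.erase i) x).eval t ^ 2) := by
  refine ⟨(∏ k ∈ Finset.univ.erase i, w (x k)) *
    ∏ k ∈ Finset.univ.erase i, ∏ j ∈ (Finset.univ.erase k).erase i, |x k - x j|, fun t => ?_⟩
  have hupd {k : ι} (hk : k ≠ i) : Function.update x i t k = x k := Function.update_of_ne hk _ _
  have hfield : ∏ k, w (Function.update x i t k) =
      w t * ∏ k ∈ Finset.univ.erase i, w (x k) := by
    rw [← Finset.mul_prod_erase _ _ (Finset.mem_univ i), Function.update_self]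
    exact congrArg _ (Finset.prod_congr rfl fun k hk => by rw [hupd (Finset.ne_of_mem_erase hk)])
  have hself : ∏ j ∈ Finset.univ.erase i, |Function.update x i t i - Function.update x i t j| =
      ∏ j ∈ Finset.univ.erase i, |t - x j| :=
    Finset.prod_congr rfl fun j hj => by
      rw [Function.update_self, hupd (Finset.ne_of_mem_erase hj)]
  have hother : ∀ k ∈ Finset.univ.erase i,
      ∏ j ∈ Finset.univ.erase k, |Function.update x i t k - Function.update x i t j| =
        |t - x k| * ∏ j ∈ (Finset.univ.erase k).erase i, |x k - x j| := by
    intro k hk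
    have hki := Finset.ne_of_mem_erase hk
    rw [← Finset.mul_prod_erase _ _ (Finset.mem_erase.2 ⟨hki.symm, Finset.mem_univ i⟩),
      Function.update_self, hupd hki, abs_sub_comm]
    exact congrArg _ (Finset.prod_congr rfl fun j hj => by rw [hupd (Finset.ne_of_mem_erase hj)])
  rw [coulombProduct, hfield, ← Finset.mul_prod_erase _ _ (Finset.mem_univ i), hself,
    Finset.prod_congr rfl hother, Finset.prod_mul_distrib, ← sq_abs, Lagrange.eval_nodal,
    Finset.abs_prod]
  ring

/-- The logarithmic derivative of `w` at `t` is `p / q`, stated without denominators. -/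
def HasLogDerivAt (w : ℝ → ℝ) (p q : ℝ[X]) (t : ℝ) : Prop :=
  ∃ w' : ℝ, HasDerivAt w w' t ∧ q.eval t * w' = p.eval t * w t

theorem HasLogDerivAt.finset_prod {κ : Type*} [DecidableEq κ] {s : Finset κ} {w : κ → ℝ → ℝ}
    {p q : κ → ℝ[X]} {t : ℝ} (h : ∀ k ∈ s, HasLogDerivAt (w k) (p k) (q k) t) :
    HasLogDerivAt (fun t => ∏ k ∈ s, w k t) (∑ k ∈ s, p k * ∏ j ∈ s.erase k, q j)
      (∏ k ∈ s, q k) t := by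
  choose! w' hw' hlog using h
  refine ⟨_, HasDerivAt.fun_finsetProd hw', ?_⟩
  dsimp only
  rw [eval_finsetSum, Finset.mul_sum, Finset.sum_mul]
  refine Finset.sum_congr rfl fun k hk => ?_
  rw [← Finset.mul_prod_erase s q hk, ← Finset.mul_prod_erase s (fun j => w j t) hk,
    eval_mul, eval_mul, smul_eq_mul]
  linear_combination (∏ j ∈ s.erase k, q j).eval t * (∏ j ∈ s.erase k, w j t) * hlog k hk

theorem hasLogDerivAt_abs_sub_rpow {a t : ℝ} (ht : t ≠ a) (r : ℝ) :
    HasLogDerivAt (fun s => |s - a| ^ r) (C r) (X - C a) t := by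
  have hta : t - a ≠ 0 := sub_ne_zero.2 ht
  have habs : |t - a| ≠ 0 := abs_ne_zero.2 hta
  refine ⟨_, ((hasDerivAt_abs hta).comp_sub_const t a).rpow_const (Or.inl habs), ?_⟩
  rw [Real.rpow_sub_one habs, eval_sub, eval_X, eval_C, eval_C, ← mul_assoc, ← mul_assoc,
    self_mul_sign]
  field_simp

/-- The weight `∏ |t - a k| ^ ρ k`: the external field of fixed charges `ρ k` at the points
`a k`. -/
noncomputable def chargeWeight {κ : Type*} [Fintype κ] (ρ a : κ → ℝ) (t : ℝ) : ℝ :=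
  ∏ k, |t - a k| ^ ρ k

/-- The numerator of the partial fraction `∑ ρ k / (X - a k)` over the denominator
`∏ (X - a k)`. -/
noncomputable def residueNumerator {R κ : Type*} [CommRing R] [Fintype κ] [DecidableEq κ]
    (ρ a : κ → R) : R[X] :=
  ∑ k, C (ρ k) * Lagrange.nodal (Finset.univ.erase k) a

theorem natDegree_residueNumerator_le {R κ : Type*} [CommRing R] [Fintype κ] [DecidableEq κ]
    {ρ a : κ → R} {d : ℕ} (hd : Fintype.card κ ≤ d + 1) :
    (residueNumerator ρ a).natDegree ≤ d := by
  nontriviality R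
  refine natDegree_sum_le_of_forall_le _ _ fun k _ => (natDegree_C_mul_le _ _).trans ?_
  rw [Lagrange.natDegree_nodal, Finset.card_erase_of_mem (Finset.mem_univ k), Finset.card_univ]
  omega

section ChargeWeight

variable {κ : Type*} [Fintype κ] {ρ a : κ → ℝ} {t : ℝ}

theorem continuous_chargeWeight (hρ : ∀ k, 0 ≤ ρ k) : Continuous (chargeWeight ρ a) :=
  continuous_finsetProd _ fun k _ =>
    (continuous_id.sub continuous_const).abs.rpow_const fun _ => Or.inr (hρ k)

theorem chargeWeight_nonneg (ρ a : κ → ℝ) (t : ℝ) : 0 ≤ chargeWeight ρ a t :=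
  Finset.prod_nonneg fun _ _ => Real.rpow_nonneg (abs_nonneg _) _

theorem chargeWeight_apply_self {k : κ} (hk : ρ k ≠ 0) : chargeWeight ρ a (a k) = 0 :=
  Finset.prod_eq_zero (Finset.mem_univ k) (by rw [sub_self, abs_zero, Real.zero_rpow hk])

theorem chargeWeight_ne_zero (ht : ∀ k, t ≠ a k) : chargeWeight ρ a t ≠ 0 :=
  Finset.prod_ne_zero_iff.2 fun k _ =>
    (Real.rpow_pos_of_pos (abs_pos.2 (sub_ne_zero.2 (ht k))) _).ne'

theorem hasLogDerivAt_chargeWeight [DecidableEq κ] (ht : ∀ k, t ≠ a k) :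
    HasLogDerivAt (chargeWeight ρ a) (residueNumerator ρ a) (Lagrange.nodal Finset.univ a) t :=
  .finset_prod fun k _ => hasLogDerivAt_abs_sub_rpow (ht k) (ρ k)

end ChargeWeight

theorem eval_lameOperator_nodal_eq_zero_of_isLocalMax {x : ι → ℝ} {i : ι}
    (hw : HasLogDerivAt w p q (x i)) (hx : coulombProduct w x ≠ 0)
    (hmax : IsLocalMax (fun t => coulombProduct w (Function.update x i t)) (x i)) :
    (lameOperator q p (Lagrange.nodal Finset.univ x)).eval (x i) = 0 := by
  obtain ⟨w', hw', hlog⟩ := hw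
  obtain ⟨c, hc⟩ := exists_coulombProduct_update w x i
  set R := Lagrange.nodal (Finset.univ.erase i) x
  have hprod : c * (w (x i) * R.eval (x i) ^ 2) ≠ 0 := by
    rwa [← hc, Function.update_eq_self]
  have hc0 : c ≠ 0 := left_ne_zero_of_mul hprod
  have hR0 : R.eval (x i) ≠ 0 := fun h => hprod (by simp [h])
  have hderiv := (hw'.fun_mul ((R.hasDerivAt (x i)).fun_pow 2)).const_mul c
  simp only [hc] at hmax
  have hcrit := (mul_eq_zero.1 (hmax.hasDerivAt_eq_zero hderiv)).resolve_left hc0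
  have hw0 : w (x i) ≠ 0 := (coulombProduct_ne_zero_iff.1 hx).1 i
  rw [Lagrange.nodal_eq_mul_nodal_erase (Finset.mem_univ i), eval_lameOperator_X_sub_C_mul]
  -- Multiplying the critical point equation by `q` turns `q w'` into `p w`.
  apply mul_left_cancel₀ (mul_ne_zero hw0 hR0)
  push_cast at hcrit
  linear_combination q.eval (x i) * hcrit - R.eval (x i) ^ 2 * hlog

theorem exists_isLocalMax_coulombProduct {l u : ι → ℝ} (hlu : ∀ i, l i < u i)
    (hw : Continuous w) (hw_nonneg : ∀ t, 0 ≤ w t) (hl : ∀ i, w (l i) = 0) (hu : ∀ i, w (u i) = 0)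
    (hw_ne : ∀ i, ∀ t ∈ Set.Ioo (l i) (u i), w t ≠ 0) :
    ∃ x : ι → ℝ, (∀ i, x i ∈ Set.Ioo (l i) (u i)) ∧ coulombProduct w x ≠ 0 ∧
      ∀ i, IsLocalMax (fun t => coulombProduct w (Function.update x i t)) (x i) := by
  obtain ⟨y, hy_inj, hy⟩ :=
    exists_injective_forall_mem_of_infinite fun i => Set.Ioo_infinite (hlu i)
  have hy_ne : coulombProduct w y ≠ 0 :=
    coulombProduct_ne_zero_iff.2 ⟨fun i => hw_ne i _ (hy i), hy_inj⟩
  obtain ⟨x, hxK, hmax⟩ := (isCompact_univ_pi fun i => isCompact_Icc).exists_isMaxOn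
    (s := Set.univ.pi fun i => Set.Icc (l i) (u i))
    ⟨y, fun i _ => Set.Ioo_subset_Icc_self (hy i)⟩ (continuous_coulombProduct hw).continuousOn
  have hx_ne : coulombProduct w x ≠ 0 :=
    (((coulombProduct_nonneg hw_nonneg y).lt_of_ne' hy_ne).trans_le
      (hmax fun i _ => Set.Ioo_subset_Icc_self (hy i))).ne'
  have hwx := (coulombProduct_ne_zero_iff.1 hx_ne).1
  have hx : ∀ i, x i ∈ Set.Ioo (l i) (u i) := fun i =>
    ⟨(hxK i trivial).1.lt_of_ne' fun h => hwx i (h ▸ hl i),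
      (hxK i trivial).2.lt_of_ne fun h => hwx i (h ▸ hu i)⟩
  refine ⟨x, hx, hx_ne, fun i => ?_⟩
  filter_upwards [isOpen_Ioo.mem_nhds (hx i)] with t ht
  rw [Function.update_eq_self]
  exact hmax (Set.update_mem_pi_iff_of_mem hxK |>.2 fun _ => Set.Ioo_subset_Icc_self ht)

end Electrostatics

theorem exists_lameOperator_nodal_add_mul_eq_zero {ι κ : Type*} [Fintype ι] [Fintype κ]
    [DecidableEq κ] {d : ℕ} {ρ a : κ → ℝ} {l u : ι → κ} (hρ : ∀ k, 0 < ρ k)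
    (hlu : ∀ i, a (l i) < a (u i))
    (hgap : ∀ i k, a k ∉ Set.Ioo (a (l i)) (a (u i))) (hd : Fintype.card κ ≤ d + 2) :
    ∃ (x : ι → ℝ) (v : ℝ[X]), Function.Injective x ∧
      (∀ i, x i ∈ Set.Ioo (a (l i)) (a (u i))) ∧ v.natDegree ≤ d ∧
      lameOperator (Lagrange.nodal Finset.univ a) (residueNumerator ρ a)
        (Lagrange.nodal Finset.univ x) + v * Lagrange.nodal Finset.univ x = 0 := by
  classical
  have hne (i : ι) {t : ℝ} (ht : t ∈ Set.Ioo (a (l i)) (a (u i))) (k : κ) : t ≠ a k :=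
    fun h => hgap i k (h ▸ ht)
  obtain ⟨x, hx, hx_ne, hmax⟩ := exists_isLocalMax_coulombProduct hlu
    (continuous_chargeWeight fun k => (hρ k).le) (chargeWeight_nonneg ρ a)
    (fun i => chargeWeight_apply_self (hρ (l i)).ne')
    (fun i => chargeWeight_apply_self (hρ (u i)).ne')
    (fun i t ht => chargeWeight_ne_zero (hne i ht))
  have hx_inj := (coulombProduct_ne_zero_iff.1 hx_ne).2
  obtain ⟨v, hv, hlame⟩ := exists_natDegree_le_of_eval_lameOperator_eq_zero
    ((Lagrange.natDegree_nodal (s := Finset.univ) (v := a)).trans_le hd)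
    (natDegree_residueNumerator_le hd) hx_inj
    fun i => eval_lameOperator_nodal_eq_zero_of_isLocalMax
      (hasLogDerivAt_chargeWeight (hne i (hx i))) hx_ne (hmax i)
  exact ⟨x, v, hx_inj, hx, hv, hlame⟩

section StieltjesPolynomials

variable {α β γ : ℝ} {n k : ℕ}

theorem isRoot_nodal_ofReal {ι : Type*} [Fintype ι] {x : ι → ℝ} {z : ℂ} :
    (Lagrange.nodal Finset.univ fun i => (x i : ℂ)).IsRoot z ↔ ∃ i, (x i : ℂ) = z := by
  simp only [IsRoot, Lagrange.eval_nodal, Finset.prod_eq_zero_iff, Finset.mem_univ, true_and,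
    sub_eq_zero, eq_comm (a := z)]

theorem ncard_isRoot_nodal_ofReal {ι : Type*} [Fintype ι] {x : ι → ℝ}
    (hx : Function.Injective x) (I : Set ℝ) :
    {z : ℂ | (Lagrange.nodal Finset.univ fun i => (x i : ℂ)).IsRoot z ∧ z.re ∈ I}.ncard =
      (x ⁻¹' I).ncard := by
  rw [← Set.ncard_image_of_injective _ (Complex.ofReal_injective.comp hx)]
  congr 1
  ext z
  simp only [isRoot_nodal_ofReal]
  constructor
  · rintro ⟨⟨i, rfl⟩, hi⟩
    exact ⟨i, hi, rfl⟩
  · rintro ⟨i, hi, rfl⟩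
    exact ⟨⟨i, rfl⟩, hi⟩

theorem niceSol_nodal {m : ℕ} {q p v : ℝ[X]} {x : Fin k ⊕ Fin m → ℝ}
    (hx : Function.Injective x) (hleft : ∀ i, x (.inl i) ∈ Set.Ioo α β)
    (hright : ∀ j, x (.inr j) ∈ Set.Ioo β γ) (hv : v.natDegree ≤ 1)
    (hlame : lameOperator q p (Lagrange.nodal Finset.univ x) +
      v * Lagrange.nodal Finset.univ x = 0) :
    NiceSol α β γ (q.map Complex.ofRealHom) (p.map Complex.ofRealHom) (k + m) k
      (v.map Complex.ofRealHom) (Lagrange.nodal Finset.univ fun i => (x i : ℂ)) := by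
  have hpre_left : x ⁻¹' Set.Ioo α β = Set.range Sum.inl := by
    ext (i | j)
    · simp [hleft i]
    · simp [(hright j).1.le]
  have hpre_right : x ⁻¹' Set.Ioo β γ = Set.range Sum.inr := by
    ext (i | j)
    · simp [(hleft i).2.le]
    · simp [hright j]
  have hmap : (Lagrange.nodal Finset.univ x).map Complex.ofRealHom =
      Lagrange.nodal Finset.univ fun i => (x i : ℂ) := by
    simp [Lagrange.nodal_eq, Polynomial.map_prod]
  refine ⟨degree_map_le.trans (degree_le_of_natDegree_le hv), by simp, ?_, ?_, fun z hz => ?_,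
    ?_, ?_⟩
  · rw [← lameOperator_apply, ← hmap, lameOperator_map, ← Polynomial.map_mul,
      ← Polynomial.map_add, hlame, Polynomial.map_zero]
  · simpa using ncard_isRoot_nodal_ofReal hx Set.univ
  · obtain ⟨i, rfl⟩ := isRoot_nodal_ofReal.1 hz
    exact Complex.ofReal_im _
  · rw [ncard_isRoot_nodal_ofReal hx, hpre_left,
      Set.ncard_range_of_injective Sum.inl_injective, Nat.card_fin]
  · rw [ncard_isRoot_nodal_ofReal hx, hpre_right,
      Set.ncard_range_of_injective Sum.inr_injective, Nat.card_fin,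
      Nat.add_sub_cancel_left]

theorem nodal_fin_three {R : Type*} [CommRing R] (α β γ : R) :
    Lagrange.nodal Finset.univ ![α, β, γ] = (X - C α) * (X - C β) * (X - C γ) := by
  simp [Lagrange.nodal_eq, Fin.prod_univ_three]

theorem residueNumerator_fin_three {R : Type*} [CommRing R] (a b c α β γ : R) :
    residueNumerator ![a, b, c] ![α, β, γ] =
      C a * ((X - C β) * (X - C γ)) + C b * ((X - C α) * (X - C γ)) +
        C c * ((X - C α) * (X - C β)) := by
  have h0 : (Finset.univ : Finset (Fin 3)).erase 0 = {1, 2} := by decide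
  have h1 : (Finset.univ : Finset (Fin 3)).erase 1 = {0, 2} := by decide
  have h2 : (Finset.univ : Finset (Fin 3)).erase 2 = {0, 1} := by decide
  simp [residueNumerator, Lagrange.nodal_eq, Fin.sum_univ_three, h0, h1, h2]

theorem exists_niceSol (hαβ : α < β) (hβγ : β < γ) {a b c : ℝ} (ha : 0 < a) (hb : 0 < b)
    (hc : 0 < c) (hk : k ≤ n) {Q P : ℂ[X]}
    (hQ : Q = (X - C (α : ℂ)) * (X - C (β : ℂ)) * (X - C (γ : ℂ)))
    (hP : P = C (a : ℂ) * ((X - C (β : ℂ)) * (X - C (γ : ℂ))) +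
      C (b : ℂ) * ((X - C (α : ℂ)) * (X - C (γ : ℂ))) +
      C (c : ℂ) * ((X - C (α : ℂ)) * (X - C (β : ℂ)))) :
    ∃ V S : ℂ[X], NiceSol α β γ Q P n k V S := by
  obtain ⟨m, rfl⟩ := Nat.exists_eq_add_of_le hk
  let l : Fin k ⊕ Fin m → Fin 3 := Sum.elim (fun _ => 0) fun _ => 1
  let u : Fin k ⊕ Fin m → Fin 3 := Sum.elim (fun _ => 1) fun _ => 2
  have hρ : ∀ r, 0 < ![a, b, c] r := by simp [Fin.forall_fin_succ, ha, hb, hc]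
  have hlu : ∀ i, ![α, β, γ] (l i) < ![α, β, γ] (u i) := by simp [l, u, hαβ, hβγ]
  have hgap : ∀ i r, ![α, β, γ] r ∉ Set.Ioo (![α, β, γ] (l i)) (![α, β, γ] (u i)) := by
    simp [l, u, Fin.forall_fin_succ, hαβ.le, hβγ.le]
  obtain ⟨x, v, hx_inj, hx, hv, hlame⟩ :=
    exists_lameOperator_nodal_add_mul_eq_zero (d := 1) hρ hlu hgap (by simp)
  have hmapQ : (Lagrange.nodal Finset.univ ![α, β, γ]).map Complex.ofRealHom = Q := by
    simp [hQ, nodal_fin_three]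
  have hmapP : (residueNumerator ![a, b, c] ![α, β, γ]).map Complex.ofRealHom = P := by
    simp [hP, residueNumerator_fin_three]
  exact ⟨_, _, hmapQ ▸ hmapP ▸
    niceSol_nodal hx_inj (fun i => hx (.inl i)) (fun j => hx (.inr j)) hv hlame⟩

theorem injective_indicial {Q P : ℂ[X]} {d : ℕ} (hQ : Q.coeff (d + 2) = 1) {r : ℝ} (hr : 0 < r)
    (hP : P.coeff (d + 1) = r) : Function.Injective (indicial Q P d) := by
  have hmono : StrictMono fun n : ℕ => (n : ℝ) * ((n - 1) + r) :=
    strictMono_nat_of_lt_succ fun n => by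
      push_cast
      have := n.cast_nonneg (α := ℝ)
      linarith
  intro m n h
  rw [indicial, indicial, hQ, hP, mul_one, mul_one] at h
  exact hmono.injective (by exact_mod_cast h)

namespace NiceSol

variable {Q P V V' S S' : ℂ[X]} {k' : ℕ}

theorem ne_zero (h : NiceSol α β γ Q P n k V S) : S ≠ 0 := by
  rintro rfl
  obtain ⟨-, -, -, -, hreal, -⟩ := h
  simpa using hreal Complex.I eval_zero

theorem mem_vanVleckSet (h : NiceSol α β γ Q P n k V S) : V ∈ vanVleckSet Q P n :=
  ⟨h.1, S, h.2.1, h.ne_zero, h.2.2.1⟩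

theorem exists_eq_C_mul (hQ : Q.natDegree ≤ 3) (hP : P.natDegree ≤ 2)
    (hinj : Function.Injective (indicial Q P 1)) (h : NiceSol α β γ Q P n k V S)
    (h' : NiceSol α β γ Q P n k' V S') : ∃ c : ℂ, c ≠ 0 ∧ S' = C c * S :=
  exists_eq_C_mul_of_lameOperator hQ hP (natDegree_le_of_degree_le h.1) hinj h.ne_zero h'.ne_zero
    h.2.2.1 h'.2.2.1

theorem index_eq_of_C_mul {c : ℂ} (hc : c ≠ 0) (h : NiceSol α β γ Q P n k V S)
    (h' : NiceSol α β γ Q P n k' V' (C c * S)) : k = k' := by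
  obtain ⟨-, -, -, -, -, hk, -⟩ := h
  obtain ⟨-, -, -, -, -, hk', -⟩ := h'
  simp only [IsRoot, eval_mul, eval_C, mul_eq_zero, hc, false_or] at hk hk'
  exact hk.symm.trans hk'

theorem index_eq (hQ : Q.natDegree ≤ 3) (hP : P.natDegree ≤ 2)
    (hinj : Function.Injective (indicial Q P 1)) (h : NiceSol α β γ Q P n k V S)
    (h' : NiceSol α β γ Q P n k' V S') : k = k' := by
  obtain ⟨c, hc, rfl⟩ := h.exists_eq_C_mul hQ hP hinj h'
  exact h.index_eq_of_C_mul hc h'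

end NiceSol

end StieltjesPolynomials

theorem stmt18_general (α β γ : ℝ) (hαβ : α < β) (hβγ : β < γ) (n : ℕ)
    (a b c : ℝ) (ha : 0 < a) (hb : 0 < b) (hc : 0 < c) (Q : ℂ[X])
    (hQ : Q = (X - C (α : ℂ)) * (X - C (β : ℂ)) * (X - C (γ : ℂ))) (P : ℂ[X])
    (hP : P = C (a : ℂ) * ((X - C (β : ℂ)) * (X - C (γ : ℂ))) +
      C (b : ℂ) * ((X - C (α : ℂ)) * (X - C (γ : ℂ))) +
      C (c : ℂ) * ((X - C (α : ℂ)) * (X - C (β : ℂ)))) :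
    (∀ p : ℕ, p ≤ n →
      ∃ V S : ℂ[X], NiceSol α β γ Q P n p V S ∧
        ∀ V' S' : ℂ[X], NiceSol α β γ Q P n p V' S' → V' = V ∧ ∃ c : ℂ, c ≠ 0 ∧ S' = C c * S) ∧
    {V : ℂ[X] | V.degree ≤ 1 ∧ ∃ S : ℂ[X], S.natDegree = n ∧ S ≠ 0 ∧
      Q * derivative (derivative S) + P * derivative S + V * S = 0}.ncard = n + 1 := by
  have hQ_deg : Q.natDegree ≤ 3 := by rw [hQ]; compute_degree
  have hP_deg : P.natDegree ≤ 2 := by rw [hP]; compute_degree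
  have hQ_coeff : Q.coeff 3 = 1 := by rw [hQ]; compute_degree!
  have hP_coeff : P.coeff 2 = (a + b + c : ℝ) := by rw [hP]; compute_degree!
  have hinj := injective_indicial hQ_coeff (by positivity) hP_coeff
  choose V S hVS using fun p : Fin (n + 1) =>
    exists_niceSol hαβ hβγ ha hb hc (Nat.lt_succ_iff.1 p.2) hQ hP
  have hV_inj : Function.Injective V := fun p p' h =>
    Fin.ext ((hVS p).index_eq hQ_deg hP_deg hinj (h ▸ hVS p'))
  have hV_range : Set.range V = vanVleckSet Q P n := by
    refine (Set.finite_range V).eq_of_subset_of_encard_le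
      (Set.range_subset_iff.2 fun p => (hVS p).mem_vanVleckSet)
      ((encard_vanVleckSet_le hQ_deg hP_deg n).trans ?_)
    simpa using hV_inj.encard_range
  refine ⟨fun p hp => ?_, ?_⟩
  · refine ⟨V ⟨p, Nat.lt_succ_of_le hp⟩, S _, hVS _, fun V' S' h' => ?_⟩
    obtain ⟨r, rfl⟩ : V' ∈ Set.range V := hV_range ▸ h'.mem_vanVleckSet
    obtain rfl : (r : ℕ) = p := (hVS r).index_eq hQ_deg hP_deg hinj h'
    exact ⟨rfl, (hVS r).exists_eq_C_mul hQ_deg hP_deg hinj h'⟩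
  · change (vanVleckSet Q P n).ncard = n + 1
    rw [← hV_range, Set.ncard_range_of_injective hV_inj, Nat.card_fin]

/-- Stieltjes's theorem: for `Q(z) = (z-α)(z-β)(z-γ)` with `α < β < γ` real,
`P = Q'/2` and `n ≥ 1`, for each `p ≤ n` there is, up to scaling of `S`, exactly one pair
`(V, S)` with `deg V ≤ 1`, `deg S = n`, `Q S'' + P S' + V S = 0`, such that `S` has `n`
simple real roots, exactly `p` of them in `(α,β)` and `n - p` in `(β,γ)`. In particular
there are exactly `n + 1` Van Vleck polynomials `V` of degree at most 1 for which the
equation has a polynomial solution of degree `n`. -/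
theorem stmt18 (α β γ : ℝ) (hαβ : α < β) (hβγ : β < γ) (n : ℕ) (hn : 1 ≤ n)
    (Q : Polynomial ℂ)
    (hQ : Q = (X - C (α : ℂ)) * (X - C (β : ℂ)) * (X - C (γ : ℂ)))
    (P : Polynomial ℂ) (hP : P = C (1 / 2 : ℂ) * derivative Q) :
    (∀ p : ℕ, p ≤ n →
      ∃ V S : Polynomial ℂ, NiceSol α β γ Q P n p V S ∧
        ∀ V' S' : Polynomial ℂ, NiceSol α β γ Q P n p V' S' →
          V' = V ∧ ∃ c : ℂ, c ≠ 0 ∧ S' = C c * S) ∧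
    {V : Polynomial ℂ | V.degree ≤ 1 ∧ ∃ S : Polynomial ℂ, S.natDegree = n ∧ S ≠ 0 ∧
      Q * (derivative (derivative S)) + P * (derivative S) + V * S = 0}.ncard = n + 1 :=
  stmt18_general α β γ hαβ hβγ n (1 / 2) (1 / 2) (1 / 2) one_half_pos one_half_pos one_half_pos
    Q hQ P <| by
      rw [hP, hQ]
      simp only [derivative_mul, derivative_X_sub_C, Complex.ofReal_div, Complex.ofReal_one,
        Complex.ofReal_ofNat]
      ring
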